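/- Let d ≥ 1 and let 1 ≤ p, q ≤ ∞ be such that (1/p, 1/q) lies in the (closed) pentagon Ω with vertices (1/2, 1), (1, 1), (1, 1/2), (3/4, (log₂ 3)/2 − 1/4) and ((log₂ 3)/2 − 1/4, 3/4). Then the inequality ‖f*g‖_{ℓ^2(ℤ^d)} ≤ ‖f‖_{ℓ^p(ℤ^d)} ‖g‖_{ℓ^q(ℤ^d)} holds for all f, g : ℤ^d → ℝ supported in {0,1}^d. -/

import Mathlib

open scoped BigOperators ENNReal

/-- Convolution of two functions on `ℤ^d`. -/
noncomputable def cconv {d : ℕ} (f g : (Fin d → ℤ) → ℝ) : (Fin d → ℤ) → ℝ :=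
  fun m => ∑' u : Fin d → ℤ, f u * g (m - u)

/-- A point of `ℤ^d` lies in the hypercube `{0,1}^d`. -/
def InCube {d : ℕ} (x : Fin d → ℤ) : Prop := ∀ i, x i = 0 ∨ x i = 1

/-- A function on `ℤ^d` is supported in `{0,1}^d`. -/
def SupportedInCube {d : ℕ} (f : (Fin d → ℤ) → ℝ) : Prop :=
  ∀ x : Fin d → ℤ, ¬ InCube x → f x = 0

/-- The `ℓ^s` norm of a function on `ℤ^d` (for `0 < s < ∞`). -/
noncomputable def lnorm {d : ℕ} (s : ℝ) (f : (Fin d → ℤ) → ℝ) : ℝ :=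
  (∑' x : Fin d → ℤ, |f x| ^ s) ^ (1 / s)


/-- The `ℓ^s` norm for an extended exponent `s ∈ (0,∞]`:
for `s = ∞` it is the sup norm, otherwise the usual `ℓ^s` norm. -/
noncomputable def lnormE {d : ℕ} (s : ℝ≥0∞) (f : (Fin d → ℤ) → ℝ) : ℝ :=
  if s = ∞ then ⨆ x : Fin d → ℤ, |f x|
  else (∑' x : Fin d → ℤ, |f x| ^ s.toReal) ^ (1 / s.toReal)

/-!
Slicing along the first coordinate turns the convolution on `{0, 1}^(d + 1)` into the convolution
of two sequences on `{0, 1}` whose entries are functions on `{0, 1}^d`. By Minkowski's inequality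
and induction on `d`, Young's inequality on every cube therefore follows from the one on `{0, 1}`.

On `{0, 1}`, write the sequences as `(α ^ (1 / p), β ^ (1 / p))` and `(γ ^ (1 / q), δ ^ (1 / q))`
with `α + β = γ + δ = 1`. The square of the `ℓ²` norm of their convolution is a sum of exponentials
in `(1 / p, 1 / q)`, hence convex, so it is at most `1` on the whole pentagon as soon as it is at
most `1` at the vertices. Only the vertices `(3 / 4, y)` and `(y, 3 / 4)` with
`y = (log₂ 3) / 2 - 1 / 4` are not elementary. There AM-GM eliminates `(α, β)`, and what remains
is `(u² + u v + v²)² ≤ (u² + v²) (u ^ k + v ^ k) ^ (2 / k)` with `k = 1 / (2 y)`. For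
`u = x ∈ [0, 1]` and `v = 1` both sides agree at `x = 0` and, by the choice of `y`, at `x = 1`. The
logarithm of their quotient increases and then decreases in between, because the sign of its
derivative is governed by a function whose own derivative has the sign of a decreasing polynomial
in `x + x⁻¹`.
-/

section SingleCrossing

theorem nonneg_of_deriv_neg_imp_nonpos {f f' : ℝ → ℝ} {a b : ℝ}
    (hf : ContinuousOn f (Set.Icc a b)) (hf' : ∀ x ∈ Set.Ioo a b, HasDerivAt f (f' x) x)
    (ha : 0 ≤ f a) (hb : 0 ≤ f b)
    (hcross : ∀ u ∈ Set.Ioo a b, ∀ v ∈ Set.Ioo a b, u < v → f' u < 0 → f' v ≤ 0)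
    {x : ℝ} (hx : x ∈ Set.Icc a b) : 0 ≤ f x := by
  by_contra! hneg
  have hax : a < x := hx.1.lt_of_ne (by rintro rfl; exact hneg.not_ge ha)
  have hxb : x < b := hx.2.lt_of_ne (by rintro rfl; exact hneg.not_ge hb)
  obtain ⟨u, hu, hu'⟩ := exists_hasDerivAt_eq_slope f f' hax
    (hf.mono (Set.Icc_subset_Icc_right hx.2)) fun y hy => hf' y ⟨hy.1, hy.2.trans hxb⟩
  obtain ⟨v, hv, hv'⟩ := exists_hasDerivAt_eq_slope f f' hxb
    (hf.mono (Set.Icc_subset_Icc_left hx.1)) fun y hy => hf' y ⟨hax.trans hy.1, hy.2⟩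
  have hu_neg : f' u < 0 := hu' ▸ div_neg_of_neg_of_pos (by linarith) (by linarith)
  have hv_pos : 0 < f' v := hv' ▸ div_pos (by linarith) (by linarith)
  exact hv_pos.not_ge <| hcross u ⟨hu.1, hu.2.trans hxb⟩ v ⟨hax.trans hv.1, hv.2⟩
    (hu.2.trans hv.1) hu_neg

end SingleCrossing

section TrinomialInequality

theorem antitoneOn_add_inv : AntitoneOn (fun x : ℝ => x + x⁻¹) (Set.Ioc 0 1) := by
  intro x hx y hy hxy
  have hx0 : 0 < x := hx.1
  have hy0 : 0 < y := hy.1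
  have hxy1 : x * y ≤ 1 := mul_le_one₀ hx.2 hy0.le hy.2
  have hdiff : x + x⁻¹ - (y + y⁻¹) = (y - x) * (1 - x * y) / (x * y) := by
    field_simp
    ring
  have hdiff_nonneg : 0 ≤ (y - x) * (1 - x * y) / (x * y) :=
    div_nonneg (mul_nonneg (sub_nonneg.2 hxy) (sub_nonneg.2 hxy1)) (by positivity)
  linarith

/-- The polynomial `(3 - s) (1 + s) - κ (s³ + s² - 2 s + 1)`. Evaluated at `κ = 1 - k` and
`s = x + x⁻¹`, it carries the sign of the derivative of `logSlope k` at `x`. -/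
def crossingPoly (κ s : ℝ) : ℝ := (3 - s) * (1 + s) - κ * (s ^ 3 + s ^ 2 - 2 * s + 1)

theorem antitoneOn_crossingPoly {κ : ℝ} (hκ : 0 ≤ κ) :
    AntitoneOn (crossingPoly κ) (Set.Ici 1) := by
  intro s hs t ht hst
  rw [Set.mem_Ici] at hs ht
  have hquad : (3 - t) * (1 + t) ≤ (3 - s) * (1 + s) := by nlinarith
  have hcubic : s ^ 3 + s ^ 2 - 2 * s + 1 ≤ t ^ 3 + t ^ 2 - 2 * t + 1 := by
    have hfactor : 0 ≤ t ^ 2 + s * t + s ^ 2 + t + s - 2 := by nlinarith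
    linear_combination mul_nonneg (sub_nonneg.2 hst) hfactor
  unfold crossingPoly
  linarith [mul_le_mul_of_nonneg_left hcubic hκ]

/-- The logarithm of the quotient of the two sides of
`(1 + x + x²)² ≤ (1 + x²) (1 + x ^ k) ^ (2 / k)`. -/
noncomputable def logGap (k x : ℝ) : ℝ :=
  Real.log (1 + x ^ 2) + 2 / k * Real.log (1 + x ^ k) - 2 * Real.log (1 + x + x ^ 2)

/-- The logarithm of the quotient of the positive and the negative part of the numerator of
the derivative of `logGap k`, so that both have the same sign. -/
noncomputable def logSlope (k x : ℝ) : ℝ :=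
  (k - 1) * Real.log x + Real.log (1 + x ^ 2 + x ^ 3) - Real.log (1 + x + x ^ 3)

theorem continuousOn_logGap {k : ℝ} (hk : 0 < k) : ContinuousOn (logGap k) (Set.Ici 0) := by
  intro x hx
  rw [Set.mem_Ici] at hx
  have hpow : ContinuousAt (fun x : ℝ => 1 + x ^ k) x :=
    continuousAt_const.add (Real.continuousAt_rpow_const x k (Or.inr hk.le))
  have hquad : ContinuousAt (fun x : ℝ => 1 + x ^ 2) x := by fun_prop
  have htri : ContinuousAt (fun x : ℝ => 1 + x + x ^ 2) x := by fun_prop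
  exact (((hquad.log (by positivity)).add ((hpow.log (by positivity)).const_mul (2 / k))).sub
    ((htri.log (by positivity)).const_mul 2)).continuousWithinAt

theorem hasDerivAt_logGap {k x : ℝ} (hk : k ≠ 0) (hx : 0 < x) :
    HasDerivAt (logGap k)
      (2 / (x * (1 + x ^ 2) * (1 + x ^ k) * (1 + x + x ^ 2)) *
        (x ^ k * (1 + x ^ 2 + x ^ 3) - x * (1 + x + x ^ 3))) x := by
  have hquad : HasDerivAt (fun x : ℝ => 1 + x ^ 2) (2 * x) x := by
    simpa using (hasDerivAt_pow 2 x).const_add 1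
  have htri : HasDerivAt (fun x : ℝ => 1 + x + x ^ 2) (1 + 2 * x) x := by
    simpa using ((hasDerivAt_id x).const_add 1).fun_add (hasDerivAt_pow 2 x)
  have hpow : HasDerivAt (fun x : ℝ => 1 + x ^ k) (k * x ^ (k - 1)) x :=
    (Real.hasDerivAt_rpow_const (Or.inl hx.ne')).const_add 1
  refine (((hquad.log (by positivity)).add ((hpow.log (by positivity)).const_mul (2 / k))).sub
    ((htri.log (by positivity)).const_mul 2)).congr_deriv ?_
  rw [Real.rpow_sub_one hx.ne']
  field_simp
  ring

theorem hasDerivAt_logSlope (k : ℝ) {x : ℝ} (hx : 0 < x) :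
    HasDerivAt (logSlope k)
      (x ^ 2 / ((1 + x + x ^ 3) * (1 + x ^ 2 + x ^ 3)) * crossingPoly (1 - k) (x + x⁻¹)) x := by
  have hden : HasDerivAt (fun x : ℝ => 1 + x + x ^ 3) (1 + 3 * x ^ 2) x := by
    simpa using ((hasDerivAt_id x).const_add 1).fun_add (hasDerivAt_pow 3 x)
  have hnum : HasDerivAt (fun x : ℝ => 1 + x ^ 2 + x ^ 3) (2 * x + 3 * x ^ 2) x := by
    simpa using ((hasDerivAt_pow 2 x).const_add 1).fun_add (hasDerivAt_pow 3 x)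
  refine ((((Real.hasDerivAt_log hx.ne').const_mul (k - 1)).add (hnum.log (by positivity))).sub
    (hden.log (by positivity))).congr_deriv ?_
  unfold crossingPoly
  field_simp
  ring

theorem logSlope_eq_log_sub_log (k : ℝ) {x : ℝ} (hx : 0 < x) :
    logSlope k x =
      Real.log (x ^ k * (1 + x ^ 2 + x ^ 3)) - Real.log (x * (1 + x + x ^ 3)) := by
  rw [logSlope, Real.log_mul (by positivity) (by positivity),
    Real.log_mul (by positivity) (by positivity), Real.log_rpow hx]
  ring

theorem logSlope_neg_iff (k : ℝ) {x : ℝ} (hx : 0 < x) :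
    logSlope k x < 0 ↔ x ^ k * (1 + x ^ 2 + x ^ 3) - x * (1 + x + x ^ 3) < 0 := by
  rw [logSlope_eq_log_sub_log k hx, sub_neg, sub_neg,
    Real.log_lt_log_iff (by positivity) (by positivity)]

theorem logSlope_nonpos_iff (k : ℝ) {x : ℝ} (hx : 0 < x) :
    logSlope k x ≤ 0 ↔ x ^ k * (1 + x ^ 2 + x ^ 3) - x * (1 + x + x ^ 3) ≤ 0 := by
  rw [logSlope_eq_log_sub_log k hx, sub_nonpos, sub_nonpos,
    Real.log_le_log_iff (by positivity) (by positivity)]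

theorem logSlope_nonpos_of_neg {k x y : ℝ} (hk : k ≤ 1) (hx : 0 < x) (hxy : x ≤ y) (hy : y ≤ 1)
    (hneg : logSlope k x < 0) : logSlope k y ≤ 0 := by
  have hderiv : ∀ z, 0 < z → HasDerivAt (fun z => -logSlope k z) _ z :=
    fun z hz => (hasDerivAt_logSlope k hz).fun_neg
  refine neg_nonneg.1 <| nonneg_of_deriv_neg_imp_nonpos (f := fun z => -logSlope k z)
    (fun z hz => (hderiv z (hx.trans_le hz.1)).continuousAt.continuousWithinAt)
    (fun z hz => hderiv z (hx.trans hz.1)) (neg_pos.2 hneg).le (by norm_num [logSlope]) ?_ ⟨hxy, hy⟩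
  intro u hu v hv huv hu_neg
  have hu0 : 0 < u := hx.trans hu.1
  have hv0 : 0 < v := hx.trans hv.1
  have hv_two : 1 ≤ v + v⁻¹ := by linarith [(one_le_inv₀ hv0).2 hv.2.le]
  have hsum : v + v⁻¹ ≤ u + u⁻¹ :=
    antitoneOn_add_inv ⟨hu0, hu.2.le⟩ ⟨hv0, hv.2.le⟩ huv.le
  have hpoly_u : 0 < crossingPoly (1 - k) (u + u⁻¹) :=
    pos_of_mul_pos_right (neg_neg_iff_pos.1 hu_neg) (by positivity)
  have hpoly_v : 0 ≤ crossingPoly (1 - k) (v + v⁻¹) :=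
    hpoly_u.le.trans (antitoneOn_crossingPoly (sub_nonneg.2 hk) hv_two (hv_two.trans hsum) hsum)
  exact neg_nonpos.2 (by positivity)

theorem logGap_nonneg {k x : ℝ} (hk : 0 < k) (hk1 : k ≤ 1) (hone : 0 ≤ logGap k 1)
    (hx : x ∈ Set.Icc 0 1) : 0 ≤ logGap k x := by
  have hzero : logGap k 0 = 0 := by simp [logGap, Real.zero_rpow hk.ne']
  refine nonneg_of_deriv_neg_imp_nonpos ((continuousOn_logGap hk).mono Set.Icc_subset_Ici_self)
    (fun y hy => hasDerivAt_logGap hk.ne' hy.1) hzero.ge hone ?_ hx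
  intro u hu v hv huv hu_neg
  have hu0 : 0 < u := hu.1
  have hv0 : 0 < v := hv.1
  have hslope_u : logSlope k u < 0 :=
    (logSlope_neg_iff k hu0).2 (neg_of_mul_neg_right hu_neg (by positivity))
  have hslope_v : logSlope k v ≤ 0 := logSlope_nonpos_of_neg hk1 hu0 huv.le hv.2.le hslope_u
  exact mul_nonpos_of_nonneg_of_nonpos (by positivity) ((logSlope_nonpos_iff k hv0).1 hslope_v)

theorem one_add_add_sq_sq_le {k x : ℝ} (hk : 0 < k) (hone : (3 : ℝ) ^ 2 ≤ 2 * 2 ^ (2 / k))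
    (hx : x ∈ Set.Icc 0 1) :
    (1 + x + x ^ 2) ^ 2 ≤ (1 + x ^ 2) * (1 + x ^ k) ^ (2 / k) := by
  have hk1 : k ≤ 1 := by
    by_contra! h
    have : (2 : ℝ) ^ (2 / k) ≤ 2 ^ (2 : ℝ) :=
      Real.rpow_le_rpow_of_exponent_le one_le_two (div_le_self zero_le_two h.le)
    norm_num at this hone
    linarith
  have hgap_one : 0 ≤ logGap k 1 := by
    have hlog := Real.log_le_log (by positivity) hone
    rw [Real.log_pow, Real.log_mul two_ne_zero (by positivity), Real.log_rpow two_pos] at hlog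
    norm_num [logGap] at hlog ⊢
    exact hlog
  have hgap := logGap_nonneg hk hk1 hgap_one hx
  have hx0 : 0 ≤ x := hx.1
  rw [← Real.log_le_log_iff (by positivity) (by positivity), Real.log_pow,
    Real.log_mul (by positivity) (by positivity), Real.log_rpow (by positivity)]
  exact sub_nonneg.1 hgap

theorem sq_add_mul_add_sq_sq_le {k u v : ℝ} (hk : 0 < k) (hone : (3 : ℝ) ^ 2 ≤ 2 * 2 ^ (2 / k))
    (hu : 0 ≤ u) (hv : 0 ≤ v) :
    (u ^ 2 + u * v + v ^ 2) ^ 2 ≤ (u ^ 2 + v ^ 2) * (u ^ k + v ^ k) ^ (2 / k) := by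
  wlog huv : u ≤ v generalizing u v
  · convert this hv hu (le_of_not_ge huv) using 1 <;> ring_nf
  rcases hv.eq_or_lt with rfl | hv_pos
  · obtain rfl : u = 0 := le_antisymm huv hu
    simp
  have hx : u / v ∈ Set.Icc 0 1 := ⟨by positivity, (div_le_one hv_pos).2 huv⟩
  have hscale : (u ^ k + v ^ k) ^ (2 / k) = v ^ 2 * (1 + (u / v) ^ k) ^ (2 / k) := by
    have hvk : 0 < v ^ k := Real.rpow_pos_of_pos hv_pos k
    have hv2 : (v ^ k) ^ (2 / k) = v ^ 2 := by
      rw [← Real.rpow_mul hv, mul_div_cancel₀ _ hk.ne', Real.rpow_two]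
    rw [← hv2, ← Real.mul_rpow hvk.le (by positivity), Real.div_rpow hu hv]
    congr 1
    field_simp
    ring
  calc (u ^ 2 + u * v + v ^ 2) ^ 2 = v ^ 4 * (1 + u / v + (u / v) ^ 2) ^ 2 := by
        field_simp
        ring
    _ ≤ v ^ 4 * ((1 + (u / v) ^ 2) * (1 + (u / v) ^ k) ^ (2 / k)) := by
        gcongr
        exact one_add_add_sq_sq_le hk hone hx
    _ = (u ^ 2 + v ^ 2) * (u ^ k + v ^ k) ^ (2 / k) := by
        rw [hscale]
        field_simp
        ring

end TrinomialInequality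

section TwoPoint

/-- The `r`-th power of the `ℓ^r` norm of the convolution of the sequences `(a₀, a₁)` and
`(b₀, b₁)` on `{0, 1}`. -/
noncomputable def twoPointEnergy (r a₀ a₁ b₀ b₁ : ℝ) : ℝ :=
  (a₀ * b₀) ^ r + (a₀ * b₁ + a₁ * b₀) ^ r + (a₁ * b₁) ^ r

/-- Young's inequality on the one-dimensional cube `{0, 1}`. -/
def TwoPointYoung (p q r : ℝ) : Prop :=
  ∀ ⦃a₀ a₁ b₀ b₁ : ℝ⦄, 0 ≤ a₀ → 0 ≤ a₁ → 0 ≤ b₀ → 0 ≤ b₁ →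
    twoPointEnergy r a₀ a₁ b₀ b₁ ≤
      ((a₀ ^ p + a₁ ^ p) ^ (1 / p) * (b₀ ^ q + b₁ ^ q) ^ (1 / q)) ^ r

theorem twoPointEnergy_comm (r a₀ a₁ b₀ b₁ : ℝ) :
    twoPointEnergy r a₀ a₁ b₀ b₁ = twoPointEnergy r b₀ b₁ a₀ a₁ := by
  simp only [twoPointEnergy, mul_comm, add_comm]

theorem twoPointEnergy_two (a₀ a₁ b₀ b₁ : ℝ) :
    twoPointEnergy 2 a₀ a₁ b₀ b₁ =
      (a₀ * b₀) ^ 2 + (a₀ * b₁ + a₁ * b₀) ^ 2 + (a₁ * b₁) ^ 2 := by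
  simp only [twoPointEnergy, Real.rpow_two]

theorem twoPointEnergy_mul {M N a₀ a₁ b₀ b₁ : ℝ} (r : ℝ) (hM : 0 ≤ M) (hN : 0 ≤ N)
    (ha₀ : 0 ≤ a₀) (ha₁ : 0 ≤ a₁) (hb₀ : 0 ≤ b₀) (hb₁ : 0 ≤ b₁) :
    twoPointEnergy r (M * a₀) (M * a₁) (N * b₀) (N * b₁) =
      (M * N) ^ r * twoPointEnergy r a₀ a₁ b₀ b₁ := by
  have hmid : M * a₀ * (N * b₁) + M * a₁ * (N * b₀) = M * N * (a₀ * b₁ + a₁ * b₀) := by ring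
  have hMN : 0 ≤ M * N := mul_nonneg hM hN
  rw [twoPointEnergy, hmid, mul_mul_mul_comm M a₀, mul_mul_mul_comm M a₁,
    Real.mul_rpow hMN (by positivity), Real.mul_rpow hMN (by positivity),
    Real.mul_rpow hMN (by positivity), twoPointEnergy]
  ring

theorem exists_weights_eq_mul_rpow {a b p : ℝ} (ha : 0 ≤ a) (hb : 0 ≤ b) (hp : 0 < p) :
    ∃ α β : ℝ, 0 ≤ α ∧ 0 ≤ β ∧ α + β = 1 ∧
      a = (a ^ p + b ^ p) ^ (1 / p) * α ^ (1 / p) ∧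
      b = (a ^ p + b ^ p) ^ (1 / p) * β ^ (1 / p) := by
  have hap : 0 ≤ a ^ p := Real.rpow_nonneg ha p
  have hbp : 0 ≤ b ^ p := Real.rpow_nonneg hb p
  rcases (add_nonneg hap hbp).eq_or_lt with hzero | hpos
  · have ha0 : a = 0 := (Real.rpow_eq_zero ha hp.ne').1 (by linarith)
    have hb0 : b = 0 := (Real.rpow_eq_zero hb hp.ne').1 (by linarith)
    refine ⟨1, 0, zero_le_one, le_rfl, add_zero 1, ?_, ?_⟩ <;>
      simp [ha0, hb0, hp.ne']
  · refine ⟨a ^ p / (a ^ p + b ^ p), b ^ p / (a ^ p + b ^ p), by positivity, by positivity,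
      by field_simp, ?_, ?_⟩
    · rw [← Real.mul_rpow hpos.le (by positivity), mul_div_cancel₀ _ hpos.ne', one_div,
        Real.rpow_rpow_inv ha hp.ne']
    · rw [← Real.mul_rpow hpos.le (by positivity), mul_div_cancel₀ _ hpos.ne', one_div,
        Real.rpow_rpow_inv hb hp.ne']

theorem twoPointYoung_of_weights {p q r : ℝ} (hp : 0 < p) (hq : 0 < q)
    (h : ∀ α β γ δ : ℝ, 0 ≤ α → 0 ≤ β → 0 ≤ γ → 0 ≤ δ → α + β = 1 → γ + δ = 1 →
      twoPointEnergy r (α ^ (1 / p)) (β ^ (1 / p)) (γ ^ (1 / q)) (δ ^ (1 / q)) ≤ 1) :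
    TwoPointYoung p q r := by
  intro a₀ a₁ b₀ b₁ ha₀ ha₁ hb₀ hb₁
  obtain ⟨α, β, hα, hβ, hαβ, ha₀_eq, ha₁_eq⟩ := exists_weights_eq_mul_rpow ha₀ ha₁ hp
  obtain ⟨γ, δ, hγ, hδ, hγδ, hb₀_eq, hb₁_eq⟩ := exists_weights_eq_mul_rpow hb₀ hb₁ hq
  set M := (a₀ ^ p + a₁ ^ p) ^ (1 / p)
  set N := (b₀ ^ q + b₁ ^ q) ^ (1 / q)
  have hM : 0 ≤ M := by positivity
  have hN : 0 ≤ N := by positivity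
  rw [ha₀_eq, ha₁_eq, hb₀_eq, hb₁_eq, twoPointEnergy_mul r hM hN (by positivity) (by positivity)
    (by positivity) (by positivity)]
  exact mul_le_of_le_one_right (by positivity) (h α β γ δ hα hβ hγ hδ hαβ hγδ)

theorem convexOn_rpow_mul_rpow {a b : ℝ} (ha : 0 ≤ a) (hb : 0 ≤ b) :
    ConvexOn ℝ (Set.Ioi (0 : ℝ) ×ˢ Set.Ioi (0 : ℝ)) fun v : ℝ × ℝ => a ^ v.1 * b ^ v.2 := by
  have hconvex : Convex ℝ (Set.Ioi (0 : ℝ) ×ˢ Set.Ioi (0 : ℝ)) :=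
    (convex_Ioi 0).prod (convex_Ioi 0)
  rcases ha.eq_or_lt with rfl | ha_pos
  · exact (convexOn_const 0 hconvex).congr fun v hv => by
      simp [Real.zero_rpow (ne_of_gt hv.1)]
  rcases hb.eq_or_lt with rfl | hb_pos
  · exact (convexOn_const 0 hconvex).congr fun v hv => by
      simp [Real.zero_rpow (ne_of_gt hv.2)]
  have hexp := convexOn_exp.comp_linearMap
    (Real.log a • LinearMap.fst ℝ ℝ ℝ + Real.log b • LinearMap.snd ℝ ℝ ℝ)
  refine (hexp.subset (Set.subset_univ _) hconvex).congr fun v _ => ?_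
  simp [Real.rpow_def_of_pos, ha_pos, hb_pos, Real.exp_add]

theorem convexOn_twoPointEnergy_two_rpow {α β γ δ : ℝ} (hα : 0 ≤ α) (hβ : 0 ≤ β) (hγ : 0 ≤ γ)
    (hδ : 0 ≤ δ) :
    ConvexOn ℝ (Set.Ioi (0 : ℝ) ×ˢ Set.Ioi (0 : ℝ)) fun v : ℝ × ℝ =>
      twoPointEnergy 2 (α ^ v.1) (β ^ v.1) (γ ^ v.2) (δ ^ v.2) := by
  have hmonomials :=
    ((((convexOn_rpow_mul_rpow (sq_nonneg α) (sq_nonneg γ)).add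
      (convexOn_rpow_mul_rpow (sq_nonneg α) (sq_nonneg δ))).add
      ((convexOn_rpow_mul_rpow (mul_nonneg hα hβ) (mul_nonneg hγ hδ)).smul zero_le_two)).add
      (convexOn_rpow_mul_rpow (sq_nonneg β) (sq_nonneg γ))).add
      (convexOn_rpow_mul_rpow (sq_nonneg β) (sq_nonneg δ))
  refine hmonomials.congr fun v _ => ?_
  simp only [Pi.add_apply, smul_eq_mul, twoPointEnergy_two, Real.mul_rpow, hα, hβ, hγ, hδ,
    ← Real.rpow_pow_comm]
  ring

theorem twoPointEnergy_two_one_one_le {α β γ δ : ℝ} (hα : 0 ≤ α) (hβ : 0 ≤ β) (hγ : 0 ≤ γ)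
    (hδ : 0 ≤ δ) (hαβ : α + β = 1) (hγδ : γ + δ = 1) :
    twoPointEnergy 2 (α ^ (1 : ℝ)) (β ^ (1 : ℝ)) (γ ^ (1 : ℝ)) (δ ^ (1 : ℝ)) ≤ 1 := by
  simp only [Real.rpow_one, twoPointEnergy_two]
  calc (α * γ) ^ 2 + (α * δ + β * γ) ^ 2 + (β * δ) ^ 2
      ≤ (α * γ + (α * δ + β * γ) + β * δ) ^ 2 := by
        linarith [show 0 ≤ 2 * (α * γ * (α * δ + β * γ) + α * γ * (β * δ) +
          (α * δ + β * γ) * (β * δ)) by positivity]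
    _ = ((α + β) * (γ + δ)) ^ 2 := by ring
    _ = 1 := by rw [hαβ, hγδ]; norm_num

theorem twoPointEnergy_two_half_one_le {α β γ δ : ℝ} (hα : 0 ≤ α) (hβ : 0 ≤ β) (hγ : 0 ≤ γ)
    (hδ : 0 ≤ δ) (hαβ : α + β = 1) (hγδ : γ + δ = 1) :
    twoPointEnergy 2 (α ^ (1 / 2 : ℝ)) (β ^ (1 / 2 : ℝ)) (γ ^ (1 : ℝ)) (δ ^ (1 : ℝ)) ≤ 1 := by
  simp only [Real.rpow_one, twoPointEnergy_two, ← Real.sqrt_eq_rpow]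
  have hmul : 2 * (√α * √β) ≤ 1 := by
    linarith [two_mul_le_add_sq √α √β, Real.sq_sqrt hα, Real.sq_sqrt hβ]
  calc (√α * γ) ^ 2 + (√α * δ + √β * γ) ^ 2 + (√β * δ) ^ 2
      = (√α ^ 2 + √β ^ 2) * (γ ^ 2 + δ ^ 2) + 2 * (√α * √β) * (γ * δ) := by ring
    _ ≤ 1 * (γ ^ 2 + δ ^ 2) + 2 * (γ * δ) := by
        rw [Real.sq_sqrt hα, Real.sq_sqrt hβ, hαβ]
        linarith [mul_le_mul_of_nonneg_right hmul (mul_nonneg hγ hδ), mul_nonneg hγ hδ]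
    _ = (γ + δ) ^ 2 := by ring
    _ = 1 := by rw [hγδ, one_pow]

-- Both `(m² + n², m n)` and `(G, H) / K` lie on the hyperbola `x² - 2 y² = 1`; the bound is
-- AM-GM for their first coordinates, after which the defect is the square `(m n)² (m n K - H)²`.
theorem mul_le_of_mem_hyperbola {m n G H K : ℝ} (hmn : m ^ 4 + n ^ 4 = 1)
    (hK : G ^ 2 - 2 * H ^ 2 = K ^ 2) :
    K * ((m ^ 6 + n ^ 6) * G + 2 * (m * n) ^ 3 * H) ≤ G ^ 2 - H ^ 2 := by
  have hb : 0 ≤ 1 - (m * n) ^ 2 := by nlinarith [sq_nonneg (m ^ 2 - n ^ 2)]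
  have hsix : m ^ 6 + n ^ 6 = (m ^ 2 + n ^ 2) * (1 - (m * n) ^ 2) := by rw [← hmn]; ring
  have ha : (m ^ 2 + n ^ 2) ^ 2 = 1 + 2 * (m * n) ^ 2 := by rw [← hmn]; ring
  rw [hsix]
  generalize m ^ 2 + n ^ 2 = a at *
  generalize m * n = b at *
  have hamgm : a * K * G ≤ K ^ 2 * (1 + b ^ 2) + H ^ 2 := by
    calc a * K * G ≤ (a ^ 2 * K ^ 2 + G ^ 2) / 2 := by linarith [two_mul_le_add_sq (a * K) G]
      _ = K ^ 2 * (1 + b ^ 2) + H ^ 2 := by rw [ha]; linarith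
  calc K * (a * (1 - b ^ 2) * G + 2 * b ^ 3 * H)
      = (1 - b ^ 2) * (a * K * G) + 2 * b ^ 3 * H * K := by ring
    _ ≤ (1 - b ^ 2) * (K ^ 2 * (1 + b ^ 2) + H ^ 2) + 2 * b ^ 3 * H * K := by gcongr
    _ = K ^ 2 + H ^ 2 - b ^ 2 * (b * K - H) ^ 2 := by ring
    _ ≤ K ^ 2 + H ^ 2 := sub_le_self _ (by positivity)
    _ = G ^ 2 - H ^ 2 := by linarith

theorem twoPointEnergy_two_cube_le {m n c e : ℝ} (hmn : m ^ 4 + n ^ 4 = 1)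
    (hpos : 0 < c ^ 4 + e ^ 4)
    (hce : (c ^ 4 + c ^ 2 * e ^ 2 + e ^ 4) ^ 2 ≤ c ^ 4 + e ^ 4) :
    twoPointEnergy 2 (m ^ 3) (n ^ 3) c e ≤ 1 := by
  set K := √(c ^ 4 + e ^ 4)
  have hK : (c ^ 2 + e ^ 2) ^ 2 - 2 * (c * e) ^ 2 = K ^ 2 := by
    rw [Real.sq_sqrt hpos.le]
    ring
  refine le_of_mul_le_mul_left ?_ (Real.sqrt_pos.2 hpos)
  calc K * twoPointEnergy 2 (m ^ 3) (n ^ 3) c e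
      = K * ((m ^ 6 + n ^ 6) * (c ^ 2 + e ^ 2) + 2 * (m * n) ^ 3 * (c * e)) := by
        rw [twoPointEnergy_two]
        ring
    _ ≤ (c ^ 2 + e ^ 2) ^ 2 - (c * e) ^ 2 := mul_le_of_mem_hyperbola hmn hK
    _ = c ^ 4 + c ^ 2 * e ^ 2 + e ^ 4 := by ring
    _ ≤ K * 1 := by
        rw [mul_one]
        exact Real.le_sqrt_of_sq_le hce

/-- The irrational coordinate `(log₂ 3) / 2 - 1 / 4` of the vertices of the pentagon. -/
noncomputable def vertexExponent : ℝ := Real.logb 2 3 / 2 - 1 / 4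

theorem three_sq_le_two_mul_two_rpow {y : ℝ} (hy : vertexExponent ≤ y) :
    (3 : ℝ) ^ 2 ≤ 2 * 2 ^ (4 * y) := by
  calc (3 : ℝ) ^ 2 = (2 ^ Real.logb 2 3) ^ 2 := by
        rw [Real.rpow_logb two_pos (by norm_num) three_pos]
    _ = 2 ^ (2 * Real.logb 2 3) := by rw [← Real.rpow_mul_natCast zero_le_two]; push_cast; ring_nf
    _ ≤ 2 ^ (1 + 4 * y) := Real.rpow_le_rpow_of_exponent_le one_le_two (by
        unfold vertexExponent at hy
        linarith)
    _ = 2 * 2 ^ (4 * y) := by rw [Real.rpow_add two_pos, Real.rpow_one]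

theorem vertexExponent_pos : 0 < vertexExponent := by
  have : 1 ≤ Real.logb 2 3 := (Real.le_logb_iff_rpow_le one_lt_two three_pos).2 (by norm_num)
  unfold vertexExponent
  linarith

theorem twoPointEnergy_two_three_quarters_le {α β γ δ y : ℝ} (hα : 0 ≤ α) (hβ : 0 ≤ β)
    (hγ : 0 ≤ γ) (hδ : 0 ≤ δ) (hαβ : α + β = 1) (hγδ : γ + δ = 1)
    (hy : vertexExponent ≤ y) :
    twoPointEnergy 2 (α ^ (3 / 4 : ℝ)) (β ^ (3 / 4 : ℝ)) (γ ^ y) (δ ^ y) ≤ 1 := by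
  have hy0 : 0 < y := vertexExponent_pos.trans_le hy
  have hquarter {a : ℝ} (ha : 0 ≤ a) : (a ^ (1 / 4 : ℝ)) ^ 4 = a := by
    rw [← Real.rpow_mul_natCast ha]
    norm_num
  have hcube {a : ℝ} (ha : 0 ≤ a) : a ^ (3 / 4 : ℝ) = (a ^ (1 / 4 : ℝ)) ^ 3 := by
    rw [← Real.rpow_mul_natCast ha]
    norm_num
  have hroot {a : ℝ} (ha : 0 ≤ a) : ((a ^ y) ^ 2) ^ (1 / (2 * y)) = a := by
    rw [← Real.rpow_mul_natCast ha, ← Real.rpow_mul ha, mul_comm y, Nat.cast_ofNat,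
      mul_one_div_cancel (by positivity), Real.rpow_one]
  have htrinomial := sq_add_mul_add_sq_sq_le (k := 1 / (2 * y)) (u := (γ ^ y) ^ 2)
    (v := (δ ^ y) ^ 2) (by positivity)
    (by convert three_sq_le_two_mul_two_rpow hy using 3; field_simp; norm_num)
    (by positivity) (by positivity)
  rw [hroot hγ, hroot hδ, hγδ, Real.one_rpow, mul_one] at htrinomial
  have hpos : 0 < (γ ^ y) ^ 4 + (δ ^ y) ^ 4 := by
    rcases hγ.eq_or_lt with rfl | hγ_pos
    · obtain rfl : δ = 1 := by linarith
      simp [Real.zero_rpow hy0.ne']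
    · positivity
  rw [hcube hα, hcube hβ]
  refine twoPointEnergy_two_cube_le (by rw [hquarter hα, hquarter hβ, hαβ]) hpos ?_
  simpa only [← pow_mul] using htrinomial

/-- The pentagon `Ω` of exponent pairs `(1 / p, 1 / q)`. -/
def pentagon : Set (ℝ × ℝ) :=
  convexHull ℝ {(1 / 2, 1), (1, 1), (1, 1 / 2), (3 / 4, vertexExponent),
    (vertexExponent, 3 / 4)}

theorem pentagon_subset_of_convex {s : Set (ℝ × ℝ)} (hs : Convex ℝ s) (h₁ : (1 / 2, 1) ∈ s)
    (h₂ : (1, 1) ∈ s) (h₃ : (1, 1 / 2) ∈ s) (h₄ : (3 / 4, vertexExponent) ∈ s)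
    (h₅ : (vertexExponent, 3 / 4) ∈ s) : pentagon ⊆ s :=
  convexHull_min (by rintro v (rfl | rfl | rfl | rfl | rfl) <;> assumption) hs

theorem pentagon_subset_Ioi_prod_Ioi : pentagon ⊆ Set.Ioi 0 ×ˢ Set.Ioi 0 := by
  apply pentagon_subset_of_convex ((convex_Ioi 0).prod (convex_Ioi 0)) <;>
    simp only [Set.mem_prod, Set.mem_Ioi, vertexExponent_pos] <;> norm_num

theorem twoPointEnergy_two_rpow_le_one_of_mem_pentagon {α β γ δ : ℝ} (hα : 0 ≤ α) (hβ : 0 ≤ β)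
    (hγ : 0 ≤ γ) (hδ : 0 ≤ δ) (hαβ : α + β = 1) (hγδ : γ + δ = 1) {v : ℝ × ℝ}
    (hv : v ∈ pentagon) :
    twoPointEnergy 2 (α ^ v.1) (β ^ v.1) (γ ^ v.2) (δ ^ v.2) ≤ 1 := by
  have hconvex := (convexOn_twoPointEnergy_two_rpow hα hβ hγ hδ).convex_le 1
  refine (pentagon_subset_of_convex hconvex ?_ ?_ ?_ ?_ ?_ hv).2 <;>
    refine ⟨pentagon_subset_Ioi_prod_Ioi (subset_convexHull ℝ _ (by simp)), ?_⟩
  · exact twoPointEnergy_two_half_one_le hα hβ hγ hδ hαβ hγδ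
  · exact twoPointEnergy_two_one_one_le hα hβ hγ hδ hαβ hγδ
  · rw [twoPointEnergy_comm]
    exact twoPointEnergy_two_half_one_le hγ hδ hα hβ hγδ hαβ
  · exact twoPointEnergy_two_three_quarters_le hα hβ hγ hδ hαβ hγδ le_rfl
  · rw [twoPointEnergy_comm]
    exact twoPointEnergy_two_three_quarters_le hγ hδ hα hβ hγδ hαβ le_rfl

theorem twoPointYoung_two_of_mem_pentagon {p q : ℝ} (hp : 0 < p) (hq : 0 < q)
    (hpq : (1 / p, 1 / q) ∈ pentagon) : TwoPointYoung p q 2 :=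
  twoPointYoung_of_weights hp hq fun _ _ _ _ hα hβ hγ hδ hαβ hγδ =>
    twoPointEnergy_two_rpow_le_one_of_mem_pentagon (v := (1 / p, 1 / q)) hα hβ hγ hδ hαβ hγδ hpq

end TwoPoint

section Tensorization

variable {d : ℕ}

theorem SupportedInCube.hasFiniteSupport {f : (Fin d → ℤ) → ℝ} (hf : SupportedInCube f) :
    f.HasFiniteSupport := by
  have hcube : (Set.univ.pi fun _ : Fin d => ({0, 1} : Set ℤ)).Finite :=
    Set.Finite.pi fun _ => Set.toFinite _
  exact hcube.subset fun x hx i _ => not_not.1 (mt (hf x) hx) i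

theorem hasFiniteSupport_cconv {f g : (Fin d → ℤ) → ℝ} (hf : f.HasFiniteSupport)
    (hg : g.HasFiniteSupport) : (cconv f g).HasFiniteSupport := by
  refine (Set.Finite.image2 (· + ·) hf hg).subset fun m hm => ?_
  obtain ⟨u, hu⟩ : ∃ u, f u * g (m - u) ≠ 0 := by
    by_contra! h
    exact hm (by simp [cconv, h])
  exact ⟨u, left_ne_zero_of_mul hu, m - u, right_ne_zero_of_mul hu, add_sub_cancel u m⟩

theorem summable_abs_rpow {ι : Type*} {f : ι → ℝ} (hf : f.HasFiniteSupport) {s : ℝ}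
    (hs : s ≠ 0) : Summable fun x => |f x| ^ s :=
  summable_of_hasFiniteSupport <| hf.subset fun x hx h => hx (by simp [h, Real.zero_rpow hs])

theorem tsum_eq_tsum_tsum_cons {F : (Fin (d + 1) → ℤ) → ℝ} (hF : Summable F) :
    ∑' x, F x = ∑' k : ℤ, ∑' x : Fin d → ℤ, F (Fin.cons k x) := by
  let e := Fin.consEquiv fun _ : Fin (d + 1) => ℤ
  exact (e.tsum_eq F).symm.trans (e.summable_iff.2 hF).tsum_prod

/-- The restriction of `f` to the hyperplane on which the first coordinate equals `k`. -/
def slice (f : (Fin (d + 1) → ℤ) → ℝ) (k : ℤ) : (Fin d → ℤ) → ℝ := fun x => f (Fin.cons k x)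

theorem supportedInCube_slice {f : (Fin (d + 1) → ℤ) → ℝ} (hf : SupportedInCube f) (k : ℤ) :
    SupportedInCube (slice f k) :=
  fun _ hx => hf _ fun h => hx fun i => h i.succ

theorem SupportedInCube.slice_eq_zero {f : (Fin (d + 1) → ℤ) → ℝ} (hf : SupportedInCube f)
    {k : ℤ} (hk : k ∉ ({0, 1} : Finset ℤ)) : slice f k = 0 := by
  funext x
  exact hf _ fun h => hk (by simpa using h 0)

theorem cconv_zero (f : (Fin d → ℤ) → ℝ) : cconv f 0 = 0 := by
  funext m
  simp [cconv]

theorem zero_cconv (g : (Fin d → ℤ) → ℝ) : cconv 0 g = 0 := by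
  funext m
  simp [cconv]

theorem slice_cconv {f : (Fin (d + 1) → ℤ) → ℝ} (hf : SupportedInCube f)
    (g : (Fin (d + 1) → ℤ) → ℝ) (k : ℤ) :
    slice (cconv f g) k =
      cconv (slice f 0) (slice g k) + cconv (slice f 1) (slice g (k - 1)) := by
  funext m
  have hcons (i : ℤ) (x : Fin d → ℤ) :
      (Fin.cons k m - Fin.cons i x : Fin (d + 1) → ℤ) = Fin.cons (k - i) (m - x) := by
    funext j
    cases j using Fin.cases <;> simp
  have hslices : slice (cconv f g) k m = ∑' i : ℤ, cconv (slice f i) (slice g (k - i)) m := by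
    refine (tsum_eq_tsum_tsum_cons
      (summable_of_hasFiniteSupport (hf.hasFiniteSupport.mul_left _))).trans ?_
    refine tsum_congr fun i => tsum_congr fun x => ?_
    change f (Fin.cons i x) * g (Fin.cons k m - Fin.cons i x) = _
    rw [hcons]
    rfl
  rw [hslices, tsum_eq_sum (s := {0, 1}), Finset.sum_pair zero_ne_one, sub_zero, Pi.add_apply]
  intro i hi
  rw [hf.slice_eq_zero hi, zero_cconv, Pi.zero_apply]

theorem lnorm_nonneg (s : ℝ) (f : (Fin d → ℤ) → ℝ) : 0 ≤ lnorm s f :=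
  Real.rpow_nonneg (tsum_nonneg fun _ => Real.rpow_nonneg (abs_nonneg _) _) _

theorem lnorm_rpow {s : ℝ} (hs : s ≠ 0) (f : (Fin d → ℤ) → ℝ) :
    lnorm s f ^ s = ∑' x, |f x| ^ s := by
  rw [lnorm, one_div, Real.rpow_inv_rpow (tsum_nonneg fun _ => by positivity) hs]

theorem lnorm_of_dim_zero {s : ℝ} (hs : s ≠ 0) (f : (Fin 0 → ℤ) → ℝ) :
    lnorm s f = |f default| := by
  rw [lnorm, tsum_eq_single default fun x hx => absurd (Subsingleton.elim x _) hx, one_div,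
    Real.rpow_rpow_inv (abs_nonneg _) hs]

theorem lnorm_add_le {r : ℝ} (hr : 1 ≤ r) {u v : (Fin d → ℤ) → ℝ}
    (hu : Summable fun x => |u x| ^ r) (hv : Summable fun x => |v x| ^ r) :
    lnorm r (u + v) ≤ lnorm r u + lnorm r v := by
  obtain ⟨hsum, hminkowski⟩ := Real.Lp_add_le_tsum_of_nonneg hr (fun x => abs_nonneg (u x))
    (fun x => abs_nonneg (v x)) hu hv
  have hle (x : Fin d → ℤ) : |(u + v) x| ^ r ≤ (|u x| + |v x|) ^ r :=
    Real.rpow_le_rpow (abs_nonneg _) (abs_add_le _ _) (by linarith)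
  have hsum_add : Summable fun x => |(u + v) x| ^ r :=
    hsum.of_nonneg_of_le (fun _ => by positivity) hle
  exact (Real.rpow_le_rpow (tsum_nonneg fun _ => by positivity)
    (hsum_add.tsum_le_tsum hle hsum) (by positivity)).trans hminkowski

theorem lnorm_rpow_eq_sum_slice {s : ℝ} (hs : s ≠ 0) {f : (Fin (d + 1) → ℤ) → ℝ}
    (hf : Summable fun x => |f x| ^ s) {t : Finset ℤ} (ht : ∀ k ∉ t, slice f k = 0) :
    lnorm s f ^ s = ∑ k ∈ t, lnorm s (slice f k) ^ s := by
  simp only [lnorm_rpow hs]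
  rw [tsum_eq_tsum_tsum_cons hf]
  refine tsum_eq_sum fun k hk => ?_
  change ∑' x, |slice f k x| ^ s = 0
  simp [ht k hk, Real.zero_rpow hs]

theorem SupportedInCube.lnorm_eq_slice {s : ℝ} (hs : s ≠ 0) {f : (Fin (d + 1) → ℤ) → ℝ}
    (hf : SupportedInCube f) :
    lnorm s f =
      (lnorm s (slice f 0) ^ s + lnorm s (slice f 1) ^ s) ^ (1 / s) := by
  rw [← Finset.sum_pair (f := fun k => lnorm s (slice f k) ^ s) zero_ne_one,
    ← lnorm_rpow_eq_sum_slice hs (summable_abs_rpow hf.hasFiniteSupport hs)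
      fun k hk => hf.slice_eq_zero hk,
    one_div, Real.rpow_rpow_inv (lnorm_nonneg s f) hs]

theorem lnorm_cconv_rpow_eq {r : ℝ} (hr : r ≠ 0) {f g : (Fin (d + 1) → ℤ) → ℝ}
    (hf : SupportedInCube f) (hg : SupportedInCube g) :
    lnorm r (cconv f g) ^ r =
      lnorm r (cconv (slice f 0) (slice g 0)) ^ r +
        lnorm r (cconv (slice f 0) (slice g 1) + cconv (slice f 1) (slice g 0)) ^ r +
        lnorm r (cconv (slice f 1) (slice g 1)) ^ r := by
  have hg_neg : slice g (-1) = 0 := hg.slice_eq_zero (by decide)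
  have hg_two : slice g 2 = 0 := hg.slice_eq_zero (by decide)
  have hvanish : ∀ k ∉ ({0, 1, 2} : Finset ℤ), slice (cconv f g) k = 0 := by
    intro k hk
    simp only [Finset.mem_insert, Finset.mem_singleton] at hk
    have hk₀ : k ∉ ({0, 1} : Finset ℤ) := by grind
    have hk₁ : k - 1 ∉ ({0, 1} : Finset ℤ) := by grind
    rw [slice_cconv hf, hg.slice_eq_zero hk₀, hg.slice_eq_zero hk₁, cconv_zero, cconv_zero,
      add_zero]
  rw [lnorm_rpow_eq_sum_slice hr (summable_abs_rpow
    (hasFiniteSupport_cconv hf.hasFiniteSupport hg.hasFiniteSupport) hr) hvanish,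
    Finset.sum_insert (by decide), Finset.sum_pair (by decide)]
  simp [slice_cconv hf, hg_neg, hg_two, cconv_zero, add_assoc]

theorem lnorm_cconv_le_of_twoPointYoung {p q r : ℝ} (hp : p ≠ 0) (hq : q ≠ 0) (hr : 1 ≤ r)
    (h : TwoPointYoung p q r) {f g : (Fin d → ℤ) → ℝ} (hf : SupportedInCube f)
    (hg : SupportedInCube g) : lnorm r (cconv f g) ≤ lnorm p f * lnorm q g := by
  have hr0 : 0 < r := by linarith
  induction d with
  | zero =>
    rw [lnorm_of_dim_zero hr0.ne', lnorm_of_dim_zero hp, lnorm_of_dim_zero hq, ← abs_mul, cconv,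
      tsum_eq_single default fun x hx => absurd (Subsingleton.elim x _) hx, sub_self]
    exact le_rfl
  | succ d ih =>
    have hf_slice := supportedInCube_slice hf
    have hg_slice := supportedInCube_slice hg
    have hyoung (i j : ℤ) :
        lnorm r (cconv (slice f i) (slice g j)) ≤ lnorm p (slice f i) * lnorm q (slice g j) :=
      ih (hf_slice i) (hg_slice j)
    have hsummable (i j : ℤ) : Summable fun x => |cconv (slice f i) (slice g j) x| ^ r :=
      summable_abs_rpow (hasFiniteSupport_cconv (hf_slice i).hasFiniteSupport
        (hg_slice j).hasFiniteSupport) hr0.ne'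
    rw [← Real.rpow_le_rpow_iff (lnorm_nonneg _ _)
      (mul_nonneg (lnorm_nonneg _ _) (lnorm_nonneg _ _)) hr0]
    calc lnorm r (cconv f g) ^ r
        = lnorm r (cconv (slice f 0) (slice g 0)) ^ r +
            lnorm r (cconv (slice f 0) (slice g 1) + cconv (slice f 1) (slice g 0)) ^ r +
            lnorm r (cconv (slice f 1) (slice g 1)) ^ r := lnorm_cconv_rpow_eq hr0.ne' hf hg
      _ ≤ twoPointEnergy r (lnorm p (slice f 0)) (lnorm p (slice f 1))
            (lnorm q (slice g 0)) (lnorm q (slice g 1)) := by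
          unfold twoPointEnergy
          gcongr
          · exact lnorm_nonneg _ _
          · exact hyoung 0 0
          · exact lnorm_nonneg _ _
          · exact (lnorm_add_le hr (hsummable 0 1) (hsummable 1 0)).trans
              (add_le_add (hyoung 0 1) (hyoung 1 0))
          · exact lnorm_nonneg _ _
          · exact hyoung 1 1
      _ ≤ (lnorm p f * lnorm q g) ^ r := by
          rw [hf.lnorm_eq_slice hp, hg.lnorm_eq_slice hq]
          exact h (lnorm_nonneg _ _) (lnorm_nonneg _ _) (lnorm_nonneg _ _) (lnorm_nonneg _ _)

end Tensorization

theorem lnormE_of_ne_top {d : ℕ} {s : ℝ≥0∞} (hs : s ≠ ∞) (f : (Fin d → ℤ) → ℝ) :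
    lnormE s f = lnorm s.toReal f :=
  if_neg hs

theorem toReal_pos_of_toReal_one_div_pos {s : ℝ≥0∞} (hs : 0 < (1 / s).toReal) :
    0 < s.toReal := by
  rwa [ENNReal.toReal_div, ENNReal.toReal_one, one_div_pos] at hs

theorem young_hypercube_r_two_pentagon (d : ℕ) (hd : 1 ≤ d)
    (p q : ℝ≥0∞) (hp : 1 ≤ p) (hq : 1 ≤ q)
    (hΩ : ((1 / p).toReal, (1 / q).toReal) ∈
      convexHull ℝ ({(1 / 2, 1), (1, 1), (1, 1 / 2),
        (3 / 4, Real.logb 2 3 / 2 - 1 / 4),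
        (Real.logb 2 3 / 2 - 1 / 4, 3 / 4)} : Set (ℝ × ℝ)))
    (f g : (Fin d → ℤ) → ℝ) (hf : SupportedInCube f) (hg : SupportedInCube g) :
    lnorm 2 (cconv f g) ≤ lnormE p f * lnormE q g := by
  change _ ∈ pentagon at hΩ
  obtain ⟨hp_inv, hq_inv⟩ := pentagon_subset_Ioi_prod_Ioi hΩ
  have hp_pos : 0 < p.toReal := toReal_pos_of_toReal_one_div_pos hp_inv
  have hq_pos : 0 < q.toReal := toReal_pos_of_toReal_one_div_pos hq_inv
  rw [ENNReal.toReal_div, ENNReal.toReal_div, ENNReal.toReal_one] at hΩ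
  rw [lnormE_of_ne_top (ENNReal.toReal_pos_iff.1 hp_pos).2.ne,
    lnormE_of_ne_top (ENNReal.toReal_pos_iff.1 hq_pos).2.ne]
  exact lnorm_cconv_le_of_twoPointYoung hp_pos.ne' hq_pos.ne' one_le_two
    (twoPointYoung_two_of_mem_pentagon hp_pos hq_pos hΩ) hf hg
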